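/- For every m×n sign matrix S (entries in {−1,1}), sign-rank(S) ≥ mn/γ₂*(S), where γ₂*(S) = sup{ |Tr(Sᵀ B)| : B an m×n real matrix with γ₂(B) ≤ 1 }. -/

import Mathlib

/-- The sign rank of a real matrix `S` (intended with entries in `{-1,1}`): the minimum
rank over all real matrices whose entrywise signs agree with `S`. -/
noncomputable def signRank {m n : ℕ} (S : Matrix (Fin m) (Fin n) ℝ) : ℕ :=
  sInf {r | ∃ M : Matrix (Fin m) (Fin n) ℝ,
    (∀ i j, Real.sign (M i j) = S i j) ∧ M.rank = r}

/-- The `γ₂` norm of a real matrix: the infimum of `max_{i,j} ‖xᵢ‖₂·‖yⱼ‖₂` over all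
factorizations `A = X Yᵀ`, where `xᵢ` are the rows of `X` and `yⱼ` the rows of `Y`. -/
noncomputable def gamma2 {m n : ℕ} (A : Matrix (Fin m) (Fin n) ℝ) : ℝ :=
  sInf {c : ℝ | ∃ k : ℕ, ∃ X : Matrix (Fin m) (Fin k) ℝ, ∃ Y : Matrix (Fin n) (Fin k) ℝ,
    A = X * Y.transpose ∧
    c = ⨆ i : Fin m, ⨆ j : Fin n,
      Real.sqrt (∑ l, X i l ^ 2) * Real.sqrt (∑ l, Y j l ^ 2)}

/-- The dual `γ₂` norm: `γ₂*(A) = sup {|Tr(Aᵀ B)| : γ₂(B) ≤ 1}`. -/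
noncomputable def gamma2Star {m n : ℕ} (A : Matrix (Fin m) (Fin n) ℝ) : ℝ :=
  sSup {r : ℝ | ∃ B : Matrix (Fin m) (Fin n) ℝ, gamma2 B ≤ 1 ∧
    r = |Matrix.trace (A.transpose * B)|}


/-- Hadamard's inequality for the determinant in the standard basis. -/
theorem hadamard_aux {d : ℕ} (v : Fin d → EuclideanSpace ℝ (Fin d)) :
    |(EuclideanSpace.basisFun (Fin d) ℝ).toBasis.det v| ≤ ∏ l, ‖v l‖ := by
  have : Fact (Module.finrank ℝ (EuclideanSpace ℝ (Fin d)) = d) := ⟨by simp⟩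
  let b := EuclideanSpace.basisFun (Fin d) ℝ
  have h := b.toBasis.orientation.abs_volumeForm_apply_le v
  rwa [Orientation.volumeForm_robust' _ b] at h

/-- Stretching by `1+s` in a unit direction. -/
theorem stretch_norm {d : ℕ} (s : ℝ) (y v : EuclideanSpace ℝ (Fin d)) (hy : ‖y‖ = 1) :
    ‖v + (s * inner ℝ y v) • y‖ ^ 2 = ‖v‖ ^ 2 + (2 * s + s ^ 2) * (inner ℝ y v) ^ 2 := by
  rw [norm_add_sq_real, norm_smul, inner_smul_right, hy, real_inner_comm, Real.norm_eq_abs,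
    mul_one, sq_abs]
  ring

theorem forster_approx {m d : ℕ} (x : Fin m → EuclideanSpace ℝ (Fin d))
    (hx0 : ∀ i, x i ≠ 0)
    (w : Fin m → Fin d → Fin m) (hw : ∀ l, Function.Bijective (fun k => w k l))
    (hdet : ∀ k, (EuclideanSpace.basisFun (Fin d) ℝ).toBasis.det (fun l => x (w k l)) ≠ 0)
    (ε : ℝ) (hε : 0 < ε) :
    ∃ A : EuclideanSpace ℝ (Fin d) →ₗ[ℝ] EuclideanSpace ℝ (Fin d), LinearMap.det A ≠ 0 ∧
      ∀ y : EuclideanSpace ℝ (Fin d), ‖y‖ = 1 →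
        (m : ℝ) - ε ≤ d * ∑ i, (inner ℝ y (A (x i)) / ‖A (x i)‖) ^ 2 := by
  classical
  let F : (EuclideanSpace ℝ (Fin d) →ₗ[ℝ] EuclideanSpace ℝ (Fin d)) → ℝ :=
    fun A => d * ∑ i, Real.log ‖A (x i)‖ - m * Real.log |LinearMap.det A|
  have hne : ∀ A : EuclideanSpace ℝ (Fin d) →ₗ[ℝ] EuclideanSpace ℝ (Fin d),
      LinearMap.det A ≠ 0 → ∀ i, A (x i) ≠ 0 := by
    intro A hA i h
    have : LinearMap.ker A = ⊥ := by
      by_contra hk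
      exact hA (LinearMap.det_eq_zero_iff_ker_ne_bot.2 hk)
    exact hx0 i ((LinearMap.ker_eq_bot'.1 this) _ h)
  let C := ∑ k, Real.log |(EuclideanSpace.basisFun (Fin d) ℝ).toBasis.det (fun l => x (w k l))|
  have hbd : ∀ A, LinearMap.det A ≠ 0 → C ≤ F A := by
    intro A hA
    have h1 : ∀ k, Real.log |LinearMap.det A| +
        Real.log |(EuclideanSpace.basisFun (Fin d) ℝ).toBasis.det (fun l => x (w k l))|
        ≤ ∑ l, Real.log ‖A (x (w k l))‖ := by
      intro k
      have h := hadamard_aux (A ∘ fun l => x (w k l))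
      rw [Module.Basis.det_comp, abs_mul] at h
      rw [← Real.log_mul (by simpa using hA) (by simpa using hdet k),
        ← Real.log_prod (fun l _ => by simpa using hne A hA _)]
      exact Real.log_le_log (mul_pos (by simpa using hA) (by simpa using hdet k)) h
    have h2 := Finset.sum_le_sum (fun k (_ : k ∈ Finset.univ) => h1 k)
    rw [Finset.sum_add_distrib, Finset.sum_comm] at h2
    have h3 : ∀ l, ∑ k, Real.log ‖A (x (w k l))‖ = ∑ i, Real.log ‖A (x i)‖ := fun l =>
      (hw l).sum_comp (fun i => Real.log ‖A (x i)‖)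
    simp only [h3] at h2
    simp [-Real.log_abs] at h2
    simp only [F, C]
    linarith
  let K : ℝ := m + d * m / 2 + 1
  have hK : 0 < K := by positivity
  let s : ℝ := ε / K
  have hs : 0 < s := by positivity
  obtain ⟨_, ⟨A, hA, rfl⟩, hAF⟩ := Real.lt_sInf_add_pos
    (s := F '' {A | LinearMap.det A ≠ 0}) ⟨_, ⟨LinearMap.id, by simp, rfl⟩⟩
    (ε := s ^ 2) (by positivity)
  refine ⟨A, hA, fun y hy => ?_⟩
  let E := LinearMap.transvection (s • (innerₛₗ ℝ y)) y
  have hEdet : LinearMap.det E = 1 + s := by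
    simp [E, hy]
  have hEA : LinearMap.det (E ∘ₗ A) ≠ 0 := by
    rw [LinearMap.det_comp, hEdet]
    exact mul_ne_zero (by positivity) hA
  have hmin : sInf (F '' {A | LinearMap.det A ≠ 0}) ≤ F (E ∘ₗ A) :=
    csInf_le ⟨C, by rintro _ ⟨A, hA, rfl⟩; exact hbd A hA⟩ ⟨_, hEA, rfl⟩
  have hdiff : ∀ i, Real.log ‖(E ∘ₗ A) (x i)‖ - Real.log ‖A (x i)‖ ≤
      (2 * s + s ^ 2) / 2 * (inner ℝ y (A (x i)) / ‖A (x i)‖) ^ 2 := by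
    intro i
    have hv : 0 < ‖A (x i)‖ := by simpa using hne A hA i
    have hEv : 0 < ‖(E ∘ₗ A) (x i)‖ := by simpa using hne _ hEA i
    have hn : ‖(E ∘ₗ A) (x i)‖ ^ 2 = ‖A (x i)‖ ^ 2 + (2 * s + s ^ 2) * (inner ℝ y (A (x i))) ^ 2 := by
      rw [← stretch_norm s y _ hy]
      simp [E, LinearMap.transvection]
    have h1 := Real.log_le_sub_one_of_pos
      (x := ‖(E ∘ₗ A) (x i)‖ ^ 2 / ‖A (x i)‖ ^ 2) (by positivity)
    rw [Real.log_div (by positivity) (by positivity), Real.log_pow, Real.log_pow, hn] at h1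
    have h2 : (‖A (x i)‖ ^ 2 + (2 * s + s ^ 2) * (inner ℝ y (A (x i))) ^ 2) / ‖A (x i)‖ ^ 2 - 1
        = (2 * s + s ^ 2) * (inner ℝ y (A (x i)) / ‖A (x i)‖) ^ 2 := by
      field_simp
      ring
    rw [h2] at h1
    rw [Nat.cast_ofNat] at h1
    linarith
  have hT : ∑ i, (inner ℝ y (A (x i)) / ‖A (x i)‖) ^ 2 ≤ (m : ℝ) := by
    have : ∀ i ∈ (Finset.univ : Finset (Fin m)), (inner ℝ y (A (x i)) / ‖A (x i)‖) ^ 2 ≤ (1 : ℝ) := by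
      intro i _
      have hv : 0 < ‖A (x i)‖ := by simpa using hne A hA i
      rw [sq_le_one_iff_abs_le_one, abs_div, abs_norm, div_le_one hv]
      simpa [hy] using abs_real_inner_le_norm y (A (x i))
    simpa using Finset.sum_le_sum this
  have hsum := Finset.sum_le_sum (fun i (_ : i ∈ Finset.univ) => hdiff i)
  rw [Finset.sum_sub_distrib, ← Finset.mul_sum] at hsum
  set T := ∑ i, (inner ℝ y (A (x i)) / ‖A (x i)‖) ^ 2
  have hlt := lt_of_lt_of_le hAF (add_le_add_left hmin (s ^ 2))
  simp only [F] at hlt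
  rw [LinearMap.det_comp, hEdet, abs_mul, abs_of_pos (by positivity : 0 < 1 + s),
    Real.log_mul (by positivity) (by simpa using hA)] at hlt
  have hlog : s * (1 - s) ≤ Real.log (1 + s) := by
    have h := Real.one_sub_inv_le_log_of_pos (by positivity : 0 < 1 + s)
    refine le_trans ?_ h
    have : 1 - (1 + s)⁻¹ = s / (1 + s) := by field_simp; ring
    rw [this, le_div_iff₀ (by positivity)]
    nlinarith [pow_pos hs 3]
  have h5 := mul_le_mul_of_nonneg_left hsum (Nat.cast_nonneg (α := ℝ) d)
  have h6 := mul_le_mul_of_nonneg_left hlog (Nat.cast_nonneg (α := ℝ) m)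
  have h7 : (m : ℝ) * (s * (1 - s)) ≤ s ^ 2 + d * ((2 * s + s ^ 2) / 2 * T) := by
    linarith
  have h8 : s * ((m : ℝ) * (1 - s)) ≤ s * (s + d * T * (1 + s / 2)) := by
    linarith
  have h9 := le_of_mul_le_mul_left h8 hs
  have h10 : (d : ℝ) * T * (s / 2) ≤ d * m * (s / 2) := by gcongr
  have h11 : s * K = ε := by simp only [s]; field_simp
  simp only [K] at h11
  linarith

theorem rank_factor {m n : ℕ} (M : Matrix (Fin m) (Fin n) ℝ) :
    ∃ (X : Matrix (Fin m) (Fin M.rank) ℝ) (Y : Matrix (Fin n) (Fin M.rank) ℝ),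
      M = X * Y.transpose := by
  let b : Module.Basis (Fin M.rank) ℝ (LinearMap.range M.mulVecLin) :=
    Module.finBasisOfFinrankEq ℝ _ rfl
  let c : Fin n → LinearMap.range M.mulVecLin :=
    fun j => ⟨M.mulVecLin (Pi.single j 1), LinearMap.mem_range_self _ _⟩
  refine ⟨Matrix.of fun i l => (b l : Fin m → ℝ) i, Matrix.of fun j l => b.repr (c j) l, ?_⟩
  ext i j
  have h := congrArg (fun v : LinearMap.range M.mulVecLin => (v : Fin m → ℝ) i) (b.sum_repr (c j))
  simp only [Submodule.coe_sum, Submodule.coe_smul, Finset.sum_apply, Pi.smul_apply,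
    smul_eq_mul] at h
  rw [Matrix.mul_apply]
  simp only [Matrix.transpose_apply, Matrix.of_apply]
  have h2 : (c j : Fin m → ℝ) i = M i j := by simp [c]
  rw [← h2, ← h]
  exact Finset.sum_congr rfl fun l _ => mul_comm _ _

open Topology Filter in
theorem det_eventually {d : ℕ} (P V : Matrix (Fin d) (Fin d) ℝ) (hV : V.det ≠ 0) :
    ∀ᶠ t : ℝ in 𝓝[≠] 0, (t • V + P).det ≠ 0 := by
  let p : Polynomial ℝ := Matrix.det ((Polynomial.X : Polynomial ℝ) • V.map Polynomial.C
    + P.map Polynomial.C)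
  have hp : p ≠ 0 := by
    intro h
    have := Polynomial.coeff_det_X_add_C_card V P
    change p.coeff _ = _ at this
    rw [h] at this
    exact hV (by simpa using this.symm)
  have hev : ∀ t, p.eval t = (t • V + P).det := by
    intro t
    simp only [p]
    rw [← Polynomial.coe_evalRingHom, RingHom.map_det]
    congr 1
    ext i j
    simp
    ring
  have hfin : {t | p.IsRoot t}.Finite := Polynomial.finite_setOfPred_isRoot hp
  have h1 : ∀ᶠ t : ℝ in 𝓝[≠] 0, t ∉ ({t | p.IsRoot t} \ {0}) := by
    apply mem_nhdsWithin_of_mem_nhds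
    exact (hfin.subset Set.sdiff_subset).isClosed.isOpen_compl.mem_nhds (by simp)
  filter_upwards [h1, self_mem_nhdsWithin] with t ht ht0 h
  exact ht ⟨by simp [Polynomial.IsRoot, hev, h], ht0⟩

open Topology Filter in
theorem perturb {m n d : ℕ} (M : Matrix (Fin m) (Fin n) ℝ) (hM : ∀ i j, M i j ≠ 0)
    (X : Matrix (Fin m) (Fin d) ℝ) (Y : Matrix (Fin n) (Fin d) ℝ) (h : M = X * Y.transpose)
    (w : Fin m → Fin d → Fin m) (hw : ∀ k, Function.Injective (w k)) :
    ∃ X' : Matrix (Fin m) (Fin d) ℝ, (∀ i j, 0 < M i j * (X' * Y.transpose) i j) ∧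
      ∀ k, (X'.submatrix (w k) id).det ≠ 0 := by
  let V : Matrix (Fin m) (Fin d) ℝ := Matrix.of fun i l => (i.val : ℝ) ^ (l : ℕ)
  have hV : ∀ k, (V.submatrix (w k) id).det ≠ 0 := by
    intro k
    have : V.submatrix (w k) id = Matrix.vandermonde (fun l => ((w k l).val : ℝ)) := by
      ext a b; simp [V, Matrix.vandermonde]
    rw [this, Matrix.det_vandermonde_ne_zero_iff]
    intro a b hab
    have hab' : ((w k a).val : ℝ) = ((w k b).val : ℝ) := hab
    exact hw k (Fin.ext (by exact_mod_cast hab'))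
  have h1 : ∀ᶠ t : ℝ in 𝓝[≠] 0, ∀ k, ((t • V + X).submatrix (w k) id).det ≠ 0 :=
    eventually_all.2 fun k => det_eventually (X.submatrix (w k) id) (V.submatrix (w k) id) (hV k)
  have h2 : ∀ᶠ t : ℝ in 𝓝[≠] 0, ∀ i j, 0 < M i j * ((t • V + X) * Y.transpose) i j := by
    refine eventually_all.2 fun i => eventually_all.2 fun j => ?_
    apply mem_nhdsWithin_of_mem_nhds
    have hc : Continuous fun t : ℝ => M i j * ((t • V + X) * Y.transpose) i j := by
      simp only [Matrix.mul_apply, Matrix.add_apply, Matrix.smul_apply]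
      fun_prop
    refine hc.continuousAt.eventually (lt_mem_nhds ?_)
    change 0 < M i j * (((0 : ℝ) • V + X) * Y.transpose) i j
    rw [zero_smul, zero_add, ← h]
    exact mul_self_pos.2 (hM i j)
  obtain ⟨t, ht1, ht2⟩ := (h1.and h2).exists
  exact ⟨_, ht2, ht1⟩

theorem gamma2_le_one {m n k : ℕ} (X : Matrix (Fin m) (Fin k) ℝ) (Y : Matrix (Fin n) (Fin k) ℝ)
    (hX : ∀ i, ∑ l, X i l ^ 2 ≤ 1) (hY : ∀ i, ∑ l, Y i l ^ 2 ≤ 1) :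
    gamma2 (X * Y.transpose) ≤ 1 := by
  unfold gamma2
  refine le_trans (csInf_le (a := ⨆ i : Fin m, ⨆ j : Fin n,
      Real.sqrt (∑ l, X i l ^ 2) * Real.sqrt (∑ l, Y j l ^ 2)) ⟨0, ?_⟩ ⟨k, X, Y, rfl, rfl⟩) ?_
  · rintro _ ⟨k, X, Y, _, rfl⟩
    exact Real.iSup_nonneg fun i => Real.iSup_nonneg fun j => by positivity
  · refine Real.iSup_le (fun i => Real.iSup_le (fun j => ?_) zero_le_one) zero_le_one
    exact mul_le_one₀ (Real.sqrt_le_one.2 (hX i)) (Real.sqrt_nonneg _) (Real.sqrt_le_one.2 (hY j))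

theorem entry_le_of_gamma2 {m n : ℕ} (B : Matrix (Fin m) (Fin n) ℝ) (h : gamma2 B ≤ 1)
    (i : Fin m) (j : Fin n) : |B i j| ≤ 2 := by
  obtain ⟨_, ⟨k, X, Y, rfl, rfl⟩, hc⟩ := Real.lt_sInf_add_pos
    (s := {c : ℝ | ∃ k : ℕ, ∃ X : Matrix (Fin m) (Fin k) ℝ, ∃ Y : Matrix (Fin n) (Fin k) ℝ,
    B = X * Y.transpose ∧
    c = ⨆ i : Fin m, ⨆ j : Fin n,
      Real.sqrt (∑ l, X i l ^ 2) * Real.sqrt (∑ l, Y j l ^ 2)})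
    ⟨_, n, B, 1, by simp, rfl⟩ (ε := 1) one_pos
  have h1 : Real.sqrt (∑ l, X i l ^ 2) * Real.sqrt (∑ l, Y j l ^ 2) ≤
      ⨆ i : Fin m, ⨆ j : Fin n, Real.sqrt (∑ l, X i l ^ 2) * Real.sqrt (∑ l, Y j l ^ 2) :=
    (le_ciSup (f := fun j => Real.sqrt (∑ l, X i l ^ 2) * Real.sqrt (∑ l, Y j l ^ 2))
      (Set.finite_range _).bddAbove j).trans
    (le_ciSup (f := fun i => ⨆ j, Real.sqrt (∑ l, X i l ^ 2) * Real.sqrt (∑ l, Y j l ^ 2))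
      (Set.finite_range _).bddAbove i)
  have h2 : |(X * Y.transpose) i j| ≤
      Real.sqrt (∑ l, X i l ^ 2) * Real.sqrt (∑ l, Y j l ^ 2) := by
    rw [← Real.sqrt_mul (by positivity), Matrix.mul_apply]
    apply Real.abs_le_sqrt
    exact Finset.sum_mul_sq_le_sq_mul_sq _ _ _
  unfold gamma2 at h
  linarith

theorem trace_eq {m n : ℕ} (S B : Matrix (Fin m) (Fin n) ℝ) :
    Matrix.trace (S.transpose * B) = ∑ j, ∑ i, S i j * B i j := by
  simp [Matrix.trace, Matrix.mul_apply]

theorem le_gamma2Star {m n : ℕ} (S B : Matrix (Fin m) (Fin n) ℝ) (h : gamma2 B ≤ 1) :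
    Matrix.trace (S.transpose * B) ≤ gamma2Star S := by
  refine (le_abs_self _).trans (le_csSup ⟨∑ j, ∑ i, |S i j| * 2, ?_⟩ ⟨B, h, rfl⟩)
  rintro _ ⟨B, h, rfl⟩
  rw [trace_eq]
  refine (Finset.abs_sum_le_sum_abs _ _).trans (Finset.sum_le_sum fun j _ => ?_)
  refine (Finset.abs_sum_le_sum_abs _ _).trans (Finset.sum_le_sum fun i _ => ?_)
  rw [abs_mul]
  exact mul_le_mul_of_nonneg_left (entry_le_of_gamma2 B h i j) (abs_nonneg _)

open scoped RealInnerProductSpace in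
theorem key_bound {m n d : ℕ} (S : Matrix (Fin m) (Fin n) ℝ)
    (hsign : ∀ i j, S i j = -1 ∨ S i j = 1)
    (X : Matrix (Fin m) (Fin d) ℝ) (Y : Matrix (Fin n) (Fin d) ℝ) (hm : 0 < m)
    (hXY : ∀ i j, 0 < S i j * (X * Y.transpose) i j)
    (w : Fin m → Fin d → Fin m) (hw : ∀ l, Function.Bijective (fun k => w k l))
    (hdet : ∀ k, (X.submatrix (w k) id).det ≠ 0) (ε : ℝ) (hε : 0 < ε) :
    n * ((m : ℝ) - ε) ≤ d * gamma2Star S := by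
  rcases Nat.eq_zero_or_pos n with rfl | hn
  · have h0 : (0 : ℝ) ≤ gamma2Star S := by
      unfold gamma2Star
      apply Real.sSup_nonneg
      rintro _ ⟨B, _, rfl⟩
      exact abs_nonneg _
    simp only [Nat.cast_zero, zero_mul]
    positivity
  let x : Fin m → EuclideanSpace ℝ (Fin d) := fun i => WithLp.toLp 2 (X i)
  let y : Fin n → EuclideanSpace ℝ (Fin d) := fun j => WithLp.toLp 2 (Y j)
  have hin : ∀ i j, inner ℝ (y j) (x i) = (X * Y.transpose) i j := by
    intro i j
    simp [x, y, Matrix.mul_apply, PiLp.inner_apply]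
  have hin0 : ∀ i j, inner ℝ (y j) (x i) ≠ 0 := by
    intro i j h
    have := hXY i j
    rw [← hin, h, mul_zero] at this
    exact lt_irrefl _ this
  have hx0 : ∀ i, x i ≠ 0 := by
    intro i h
    exact hin0 i ⟨0, hn⟩ (by rw [h, inner_zero_right])
  have hdet' : ∀ k, (EuclideanSpace.basisFun (Fin d) ℝ).toBasis.det (fun l => x (w k l)) ≠ 0 := by
    intro k
    have : (EuclideanSpace.basisFun (Fin d) ℝ).toBasis.toMatrix (fun l => x (w k l))
        = (X.submatrix (w k) id).transpose := by
      ext a b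
      simp [Module.Basis.toMatrix_apply, x]
    rw [Module.Basis.det_apply, this, Matrix.det_transpose]
    exact hdet k
  obtain ⟨A, hA, hAy⟩ := forster_approx x hx0 w hw hdet' ε hε
  let Ae := LinearMap.equivOfDetNeZero A hA
  have hAe : ∀ v, Ae.symm (A v) = v := fun v => Ae.symm_apply_apply v
  let z : Fin n → EuclideanSpace ℝ (Fin d) :=
    fun j => LinearMap.adjoint (Ae.symm : _ →ₗ[ℝ] EuclideanSpace ℝ (Fin d)) (y j)
  have hz : ∀ i j, inner ℝ (z j) (A (x i)) = inner ℝ (y j) (x i) := by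
    intro i j
    simp only [z]
    rw [LinearMap.adjoint_inner_left]
    simp [hAe]
  have hz0 : ∀ j, 0 < ‖z j‖ := by
    intro j
    rw [norm_pos_iff]
    intro h
    apply hin0 ⟨0, hm⟩ j
    rw [← hz, h, inner_zero_left]
  have hAx0 : ∀ i, 0 < ‖A (x i)‖ := by
    intro i
    rw [norm_pos_iff]
    intro h
    apply hin0 i ⟨0, hn⟩
    rw [← hz, h, inner_zero_right]
  let u : Fin m → EuclideanSpace ℝ (Fin d) := fun i => ‖A (x i)‖⁻¹ • A (x i)
  let v : Fin n → EuclideanSpace ℝ (Fin d) := fun j => ‖z j‖⁻¹ • z j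
  have hu : ∀ i, ‖u i‖ = 1 := fun i => by
    simp only [u]
    rw [norm_smul, norm_inv, norm_norm, inv_mul_cancel₀ (hAx0 i).ne']
  have hv : ∀ j, ‖v j‖ = 1 := fun j => by
    simp only [v]
    rw [norm_smul, norm_inv, norm_norm, inv_mul_cancel₀ (hz0 j).ne']
  let U : Matrix (Fin m) (Fin d) ℝ := Matrix.of fun i l => u i l
  let W : Matrix (Fin n) (Fin d) ℝ := Matrix.of fun j l => v j l
  have hsq : ∀ q : EuclideanSpace ℝ (Fin d), ‖q‖ = 1 → ∑ l, q l ^ 2 ≤ 1 := by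
    intro q hq
    rw [← EuclideanSpace.real_norm_sq_eq, hq]
    norm_num
  have hB := le_gamma2Star S (U * W.transpose)
    (gamma2_le_one U W (fun i => hsq _ (hu i)) (fun j => hsq _ (hv j)))
  have hent : ∀ i j, (U * W.transpose) i j = inner ℝ (v j) (u i) := by
    intro i j
    simp [U, W, Matrix.mul_apply, PiLp.inner_apply]
  have hent2 : ∀ i j, inner ℝ (v j) (u i) = ‖A (x i)‖⁻¹ * ‖z j‖⁻¹ * (X * Y.transpose) i j := by
    intro i j
    simp only [u, v]
    rw [inner_smul_left, inner_smul_right, hz, hin]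
    simp
    ring
  have hge : ∀ i j, (inner ℝ (v j) (u i)) ^ 2 ≤ S i j * (U * W.transpose) i j := by
    intro i j
    rw [hent]
    have hpos : 0 < S i j * inner ℝ (v j) (u i) := by
      rw [hent2]
      have h1 := hXY i j
      have h2 := hAx0 i
      have h3 := hz0 j
      have : S i j * (‖A (x i)‖⁻¹ * ‖z j‖⁻¹ * (X * Y.transpose) i j)
        = ‖A (x i)‖⁻¹ * ‖z j‖⁻¹ * (S i j * (X * Y.transpose) i j) := by ring
      rw [this]
      positivity
    have hle := abs_le.1 (abs_real_inner_le_norm (v j) (u i))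
    rw [hu, hv] at hle
    rcases hsign i j with h | h <;> rw [h] at hpos ⊢ <;> nlinarith [hle.1, hle.2]
  have hcol : ∀ j, (m : ℝ) - ε ≤ d * ∑ i, (inner ℝ (v j) (u i)) ^ 2 := by
    intro j
    convert! hAy (v j) (hv j) using 5 with i
    simp only [u]
    rw [inner_smul_right]
    ring
  have htot : (n : ℝ) * (m - ε) ≤ ∑ j : Fin n, d * ∑ i, (inner ℝ (v j) (u i)) ^ 2 := by
    have := Finset.sum_le_sum (fun j (_ : j ∈ (Finset.univ : Finset (Fin n))) => hcol j)
    rwa [Finset.sum_const, Finset.card_univ, Fintype.card_fin, nsmul_eq_mul] at this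
  refine htot.trans ?_
  rw [← Finset.mul_sum]
  refine mul_le_mul_of_nonneg_left (le_trans ?_ hB) (Nat.cast_nonneg d)
  rw [trace_eq]
  exact Finset.sum_le_sum fun j _ => Finset.sum_le_sum fun i _ => hge i j

/-- For every `m × n` sign matrix `S` (entries in `{-1,1}`), the sign rank is at least
`mn/γ₂*(S)`. -/
theorem signRank_ge_div_gamma2Star {m n : ℕ}
    (S : Matrix (Fin m) (Fin n) ℝ)
    (hsign : ∀ i j, S i j = -1 ∨ S i j = 1) :
    ((m * n : ℕ) : ℝ) / gamma2Star S ≤ (signRank S : ℝ) := by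
  
  rcases Nat.eq_zero_or_pos m with rfl | hm
  · simp
  have : NeZero m := ⟨hm.ne'⟩
  have hmem := Nat.sInf_mem (s := {r | ∃ M : Matrix (Fin m) (Fin n) ℝ,
    (∀ i j, Real.sign (M i j) = S i j) ∧ M.rank = r}) ⟨_, S, by
      intro i j
      rcases hsign i j with h | h <;> rw [h]
      · exact Real.sign_of_neg (by norm_num)
      · exact Real.sign_of_pos one_pos, rfl⟩
  change signRank S ∈ _ at hmem
  obtain ⟨M, hM, hr⟩ := hmem
  rw [← hr]
  have hMS : ∀ i j, M i j ≠ 0 ∧ 0 < S i j * M i j := by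
    intro i j
    rw [← hM]
    rcases lt_trichotomy (M i j) 0 with h | h | h
    · rw [Real.sign_of_neg h]
      exact ⟨h.ne, by linarith⟩
    · have h1 := hM i j
      rw [h, Real.sign_zero] at h1
      rcases hsign i j with h2 | h2 <;> rw [h2] at h1 <;> norm_num at h1
    · rw [Real.sign_of_pos h]
      exact ⟨h.ne', by linarith⟩
  obtain ⟨X, Y, hXY⟩ := rank_factor M
  have hd : M.rank ≤ m := by simpa using M.rank_le_height
  let w : Fin m → Fin M.rank → Fin m := fun k l => k + Fin.castLE hd l
  obtain ⟨X', hX', hdet⟩ := perturb M (fun i j => (hMS i j).1) X Y hXY w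
    (fun k a b hab => Fin.castLE_injective hd (add_left_cancel hab))
  have hpos : ∀ i j, 0 < S i j * (X' * Y.transpose) i j := by
    intro i j
    have h1 := mul_pos (hMS i j).2 (hX' i j)
    have h2 : S i j * M i j * (M i j * (X' * Y.transpose) i j)
      = (M i j) ^ 2 * (S i j * (X' * Y.transpose) i j) := by ring
    rw [h2] at h1
    exact pos_of_mul_pos_right h1 (sq_nonneg _)
  have hkey : ∀ ε : ℝ, 0 < ε → (n : ℝ) * (m - ε) ≤ M.rank * gamma2Star S := fun ε hε =>
    key_bound S hsign X' Y hm hpos w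
      (fun l => (Equiv.addRight (Fin.castLE hd l)).bijective) hdet ε hε
  have hfin : (n : ℝ) * m ≤ M.rank * gamma2Star S := by
    apply le_of_forall_pos_le_add
    intro ε hε
    have h := hkey (ε / (n + 1)) (by positivity)
    have h2 : (n : ℝ) * (ε / (n + 1)) ≤ ε := by
      rw [mul_div_assoc', div_le_iff₀ (by positivity)]
      nlinarith
    nlinarith
  have h0 : (0 : ℝ) ≤ gamma2Star S := by
    unfold gamma2Star
    apply Real.sSup_nonneg
    rintro _ ⟨B, _, rfl⟩
    exact abs_nonneg _
  apply div_le_of_le_mul₀ h0 (Nat.cast_nonneg _)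
  push_cast
  linarith
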